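/- Let M be a cofibrantly generated model category, with a generating set I of cofibrations and a generating set J of trivial cofibrations (so that the trivial fibrations are exactly the maps with the right lifting property with respect to I, the fibrations are exactly those with the right lifting property with respect to J, and the small object argument applies to I and J). Suppose the source and target of every map in I are finitely presentable. Then for every small filtered category H and every natural transformation p : X ⟶ Y between functors X, Y : H → M whose components are all weak equivalences (respectively, all trivial fibrations), the induced map colim_H X → colim_H Y is a weak equivalence (respectively, a trivial fibration). -/

import Mathlib

open CategoryTheory CategoryTheory.Limits CategoryTheory.MonoidalCategory

universe v u v₂ u₂

namespace Paper

variable {C : Type u} [Category.{v} C]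

/-- `f` is a retract of `g` in the arrow category. -/
def IsRetractOf {A B X Y : C} (f : A ⟶ B) (g : X ⟶ Y) : Prop :=
  ∃ (iA : A ⟶ X) (rA : X ⟶ A) (iB : B ⟶ Y) (rB : Y ⟶ B),
    iA ≫ rA = 𝟙 A ∧ iB ≫ rB = 𝟙 B ∧ iA ≫ g = f ≫ iB ∧ rA ≫ f = g ≫ rB

/-- The class of maps having the left lifting property with respect to every map in `T`. -/
def LLP (T : MorphismProperty C) : MorphismProperty C := fun _ _ i =>
  ∀ ⦃X Y : C⦄ (p : X ⟶ Y), T p → HasLiftingProperty i p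

/-- The class of maps having the right lifting property with respect to every map in `T`. -/
def RLP (T : MorphismProperty C) : MorphismProperty C := fun _ _ p =>
  ∀ ⦃A B : C⦄ (i : A ⟶ B), T i → HasLiftingProperty i p

/-- A model structure on a category: weak equivalences, cofibrations and fibrations,
satisfying the usual axioms (two-out-of-three, retracts, lifting, factorization).
Completeness and cocompleteness are imposed separately. -/
structure ModelStructure (C : Type u) [Category.{v} C] where
  W : MorphismProperty C
  Cof : MorphismProperty C
  Fib : MorphismProperty C
  two_out_of_three : ∀ ⦃X Y Z : C⦄ (f : X ⟶ Y) (g : Y ⟶ Z),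
      (W f → W g → W (f ≫ g)) ∧ (W f → W (f ≫ g) → W g) ∧ (W g → W (f ≫ g) → W f)
  retract_W : ∀ ⦃A B X Y : C⦄ {f : A ⟶ B} {g : X ⟶ Y}, IsRetractOf f g → W g → W f
  retract_Cof : ∀ ⦃A B X Y : C⦄ {f : A ⟶ B} {g : X ⟶ Y}, IsRetractOf f g → Cof g → Cof f
  retract_Fib : ∀ ⦃A B X Y : C⦄ {f : A ⟶ B} {g : X ⟶ Y}, IsRetractOf f g → Fib g → Fib f
  lift_Cof_TrivFib : ∀ ⦃A B X Y : C⦄ (i : A ⟶ B) (p : X ⟶ Y),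
      Cof i → Fib p → W p → HasLiftingProperty i p
  lift_TrivCof_Fib : ∀ ⦃A B X Y : C⦄ (i : A ⟶ B) (p : X ⟶ Y),
      Cof i → W i → Fib p → HasLiftingProperty i p
  factor_Cof_TrivFib : ∀ ⦃X Y : C⦄ (f : X ⟶ Y),
      ∃ (Z : C) (i : X ⟶ Z) (p : Z ⟶ Y), Cof i ∧ Fib p ∧ W p ∧ i ≫ p = f
  factor_TrivCof_Fib : ∀ ⦃X Y : C⦄ (f : X ⟶ Y),
      ∃ (Z : C) (i : X ⟶ Z) (p : Z ⟶ Y), Cof i ∧ W i ∧ Fib p ∧ i ≫ p = f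

namespace ModelStructure

variable (M : ModelStructure C)

/-- Trivial cofibrations. -/
def TrivCof : MorphismProperty C := fun _ _ f => M.Cof f ∧ M.W f

/-- Trivial fibrations. -/
def TrivFib : MorphismProperty C := fun _ _ f => M.Fib f ∧ M.W f

/-- An object is cofibrant if the map from the initial object is a cofibration. -/
def Cofibrant [HasInitial C] (X : C) : Prop := M.Cof (initial.to X)

/-- An object is fibrant if the map to the terminal object is a fibration. -/
def Fibrant [HasTerminal C] (X : C) : Prop := M.Fib (terminal.from X)

end ModelStructure

/-- A cylinder object for `X`: a factorization of the fold map `X ⊔ X → X` into a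
cofibration `(i₀, i₁)` followed by a weak equivalence `p`. -/
structure IsCylinder [HasBinaryCoproducts C] (M : ModelStructure C) (X Cyl : C)
    (i₀ i₁ : X ⟶ Cyl) (p : Cyl ⟶ X) : Prop where
  cof : M.Cof (coprod.desc i₀ i₁)
  weq : M.W p
  comp₀ : i₀ ≫ p = 𝟙 X
  comp₁ : i₁ ≫ p = 𝟙 X

section Monoidal

variable [MonoidalCategory C]

/-- The pushout product of `i : A ⟶ B` and `j : X ⟶ Y`:
the induced map `(B ⊗ X) ⊔_{A ⊗ X} (A ⊗ Y) ⟶ B ⊗ Y`. -/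
noncomputable def pushoutProduct {A B X Y : C} (i : A ⟶ B) (j : X ⟶ Y)
    [HasPushout (i ▷ X) (A ◁ j)] :
    pushout (i ▷ X) (A ◁ j) ⟶ B ⊗ Y :=
  pushout.desc (B ◁ j) (i ▷ Y) (whisker_exchange i j).symm

/-- The pushout-product axiom for a model structure on a monoidal category: the pushout
product of two cofibrations is a cofibration, which is trivial if one of the two is. -/
def PushoutProductAxiom [HasPushouts C] (M : ModelStructure C) : Prop :=
  ∀ ⦃A B X Y : C⦄ (i : A ⟶ B) (j : X ⟶ Y), M.Cof i → M.Cof j →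
    M.Cof (pushoutProduct i j) ∧
      (M.W i → M.W (pushoutProduct i j)) ∧ (M.W j → M.W (pushoutProduct i j))

/-- The pullback-hom map `[B, X] ⟶ [B, Y] ×_{[A, Y]} [A, X]` induced by `j : A ⟶ B`
and `p : X ⟶ Y` via the internal hom. -/
noncomputable def pullbackHom [MonoidalClosed C] {A B X Y : C} (j : A ⟶ B) (p : X ⟶ Y)
    [HasPullback ((MonoidalClosed.pre j).app Y) ((ihom A).map p)] :
    (ihom B).obj X ⟶ pullback ((MonoidalClosed.pre j).app Y) ((ihom A).map p) :=
  pullback.lift ((ihom B).map p) ((MonoidalClosed.pre j).app X)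
    ((MonoidalClosed.pre j).naturality p)

/-- Two maps `f g : X ⟶ Y` are `V`-homotopic if there are a cylinder object `CS` for the
monoidal unit and a homotopy `H : CS ⊗ X ⟶ Y` connecting them. -/
def VHomotopic [HasBinaryCoproducts C] (M : ModelStructure C) {X Y : C} (f g : X ⟶ Y) : Prop :=
  ∃ (CS : C) (i₀ i₁ : 𝟙_ C ⟶ CS) (p : CS ⟶ 𝟙_ C) (_ : IsCylinder M (𝟙_ C) CS i₀ i₁ p)
    (H : CS ⊗ X ⟶ Y),
      (λ_ X).inv ≫ i₀ ▷ X ≫ H = f ∧ (λ_ X).inv ≫ i₁ ▷ X ≫ H = g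

end Monoidal

/-- Two maps `f g : X ⟶ Y` are left homotopic if there are a cylinder object `CX` for `X`
and a homotopy `H : CX ⟶ Y` connecting them. -/
def LeftHomotopic [HasBinaryCoproducts C] (M : ModelStructure C) {X Y : C} (f g : X ⟶ Y) : Prop :=
  ∃ (CX : C) (i₀ i₁ : X ⟶ CX) (p : CX ⟶ X) (_ : IsCylinder M X CX i₀ i₁ p) (H : CX ⟶ Y),
    i₀ ≫ H = f ∧ i₁ ≫ H = g

/-- An object `A` is finitely presentable if `Hom(A, –)` preserves (small) filtered colimits. -/
def FinitelyPresentable (A : C) : Prop :=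
  ∀ (J : Type v) (_ : SmallCategory J), IsFiltered J →
    Nonempty (PreservesColimitsOfShape J (coyoneda.obj (Opposite.op A)))

section Cell

/-- The restriction of a diagram `F : β ⥤ C` to the elements below `b`. -/
def restrictIio {β : Type v} [Preorder β] (F : β ⥤ C) (b : β) : Set.Iio b ⥤ C where
  obj a := F.obj a.1
  map {a a'} h := F.map (homOfLE (leOfHom h : a.1 ≤ a'.1))
  map_id a := F.map_id a.1
  map_comp f g := by rw [← F.map_comp]; rfl

/-- The canonical cocone on the restriction of `F` below `b`, with point `F.obj b`. -/
def coconeIio {β : Type v} [Preorder β] (F : β ⥤ C) (b : β) : Cocone (restrictIio F b) where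
  pt := F.obj b
  ι :=
    { app := fun a => F.map (homOfLE a.2.le)
      naturality := fun a a' h => by
        dsimp [restrictIio]
        rw [Category.comp_id, ← F.map_comp]
        rfl }

/-- A bundled well-ordered index type with a bottom element and successors. -/
class WellOrderedBot (β : Type v) extends LinearOrder β, OrderBot β, SuccOrder β where
  wf : WellFoundedLT β

/-- `f` is a transfinite composition of maps in `R`: there is a continuous (smooth at limit
stages) diagram indexed by a well-ordered set, whose successor maps lie in `R`, such that `f`
is (isomorphic to) the map from the bottom stage into the colimit. -/
def IsTransfiniteCompositionOf (R : MorphismProperty C) : MorphismProperty C := fun X Y f =>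
  ∃ (β : Type v) (_ : WellOrderedBot β) (F : β ⥤ C) (c : Cocone F) (_ : IsColimit c)
    (e₀ : X ≅ F.obj ⊥) (e₁ : c.pt ≅ Y),
      (∀ b : β, ¬IsMax b → R (F.map (homOfLE (Order.le_succ b)))) ∧
      (∀ b : β, Order.IsSuccLimit b → Nonempty (IsColimit (coconeIio F b))) ∧
      f = e₀.hom ≫ c.ι.app ⊥ ≫ e₁.hom

/-- Cobase changes (pushouts) of maps in `R`. -/
def CobaseChangeOf (R : MorphismProperty C) : MorphismProperty C := fun X Y f =>
  ∃ (A B : C) (r : A ⟶ B) (t : A ⟶ X) (b : B ⟶ Y), R r ∧ IsPushout t r f b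

/-- `R`-cell: transfinite compositions of cobase changes of maps in `R`. -/
def Cell (R : MorphismProperty C) : MorphismProperty C :=
  IsTransfiniteCompositionOf (CobaseChangeOf R)

/-- The class of maps of the form `r ▷ Q = r ⊗ id_Q`, for `r` in `R` and `Q` an
arbitrary object. -/
inductive TensorObjAux [MonoidalCategory C] (R : MorphismProperty C) : ∀ (X Y : C), (X ⟶ Y) → Prop
  | mk {A B : C} (r : A ⟶ B) (Q : C) (hr : R r) : TensorObjAux R (A ⊗ Q) (B ⊗ Q) (r ▷ Q)

/-- The class `R ⊗ Ob(C)` of maps `r ⊗ id_Q` with `r ∈ R`. -/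
def tensorWithObjects [MonoidalCategory C] (R : MorphismProperty C) : MorphismProperty C :=
  fun X Y f => TensorObjAux R X Y f

/-- A monoidal model category is strongly left proper if the cobase change of a weak
equivalence along any map in `(cof ⊗ Ob(V))`-cell is a weak equivalence. -/
def StronglyLeftProper [MonoidalCategory C] (M : ModelStructure C) : Prop :=
  ∀ ⦃A B A' B' : C⦄ (w : A ⟶ B) (g : A ⟶ A') (g' : B ⟶ B') (w' : A' ⟶ B'),
    M.W w → Cell (tensorWithObjects M.Cof) g → IsPushout w g g' w' → M.W w'

end Cell

end Paper

/-!
Trivial fibrations are the maps with the right lifting property against maps between finitely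
presentable objects, and any such lifting problem over a filtered colimit already lives at a finite
stage; hence they are closed under filtered colimits.

For weak equivalences, a filtered category receives a final functor from the directed poset `K` of
finite subsets of some set, which is graded by cardinality. Over such a `K` every map of diagrams
factors as a map `i` with the left lifting property against the pointwise fibrations, followed by a
pointwise fibration `q`: the factorization is corrected rank by rank, by attaching left Kan
extensions along the inclusion of the discrete set of elements of rank `n`, and these do not change
the values at lower ranks. The map `colim i` lifts against all fibrations, so it is a trivial
cofibration. If `i ≫ q` is a pointwise weak equivalence, then `q` is a pointwise trivial fibration
by two-out-of-three, hence so is `colim q`, and the composite is a weak equivalence.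
-/

namespace Paper

section Discrete

variable {C : Type*} [Category* C] {S : Type*} [Category* S] [IsDiscrete S]

/-- A family of maps between the values of two diagrams on a discrete category, as a map of
diagrams. -/
def natTransOfIsDiscrete {F G : S ⥤ C} (φ : ∀ s, F.obj s ⟶ G.obj s) : F ⟶ G where
  app := φ
  naturality s t f := by
    obtain rfl := obj_ext_of_isDiscrete f
    rw [Subsingleton.elim f (𝟙 s), F.map_id, G.map_id, Category.id_comp, Category.comp_id]

lemma llp_functorCategory_le_functorCategory_llp (R : MorphismProperty C) :
    R.llp.functorCategory S ≤ (R.functorCategory S).llp := by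
  intro A B i hi X Y p hp
  refine ⟨fun {f g} sq => ?_⟩
  have sq_app (s : S) : CommSq (f.app s) (i.app s) (p.app s) (g.app s) :=
    sq.map ((evaluation S C).obj s)
  have hasLift (s : S) : (sq_app s).HasLift := (hi s (p.app s) (hp s)).sq_hasLift (sq_app s)
  exact ⟨⟨{ l := natTransOfIsDiscrete fun s => (sq_app s).lift
            fac_left := by ext s; exact (sq_app s).fac_left
            fac_right := by ext s; exact (sq_app s).fac_right }⟩⟩

instance hasFactorization_functorCategory_of_isDiscrete (W₁ W₂ : MorphismProperty C)
    [W₁.HasFactorization W₂] :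
    (W₁.functorCategory S).HasFactorization (W₂.functorCategory S) where
  nonempty_mapFactorizationData {X Y} f :=
    let φ (s : S) := W₁.factorizationData W₂ (f.app s)
    let Z : S ⥤ C :=
      { obj := fun s => (φ s).Z
        map := fun g => eqToHom (by rw [obj_ext_of_isDiscrete g]) }
    ⟨{ Z := Z
       i := natTransOfIsDiscrete fun s => (φ s).i
       p := natTransOfIsDiscrete fun s => (φ s).p
       fac := by ext s; exact (φ s).fac
       hi := fun s => (φ s).hi
       hp := fun s => (φ s).hp }⟩

instance isDiscrete_costructuredArrow {K : Type*} [Category* K] (L : S ⥤ K) (k : K) :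
    IsDiscrete (CostructuredArrow L k) where
  subsingleton _ _ := ⟨fun _ _ => CostructuredArrow.hom_ext _ _ (Subsingleton.elim _ _)⟩
  eq_of_hom {s t} f := by
    obtain ⟨s, ⟨⟨⟩⟩, a⟩ := s
    obtain ⟨t, ⟨⟨⟩⟩, b⟩ := t
    have hst : s = t := obj_ext_of_isDiscrete f.left
    subst hst
    have hf : f.left = 𝟙 s := Subsingleton.elim _ _
    have hab : a = b := by simpa [hf] using (CostructuredArrow.w f).symm
    rw [hab]

end Discrete

section Colimit

variable {C : Type*} [Category* C] (R : MorphismProperty C) {D : Type*} [Category* D]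

lemma llp_of_isColimit {X₁ X₂ : D ⥤ C} {c₁ : Cocone X₁} {c₂ : Cocone X₂}
    (h₁ : IsColimit c₁) (h₂ : IsColimit c₂) {f : X₁ ⟶ X₂} (hf : (R.functorCategory D).llp f)
    {φ : c₁.pt ⟶ c₂.pt} (hφ : ∀ j, c₁.ι.app j ≫ φ = f.app j ≫ c₂.ι.app j) : R.llp φ := by
  intro A B p hp
  refine ⟨fun {a b} sq => ?_⟩
  have sq' : CommSq (c₁.ι ≫ (Functor.const D).map a) f ((Functor.const D).map p)
      (c₂.ι ≫ (Functor.const D).map b) := ⟨by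
    ext j
    simp [sq.w, reassoc_of% hφ j]⟩
  have := (hf ((Functor.const D).map p) (fun _ => hp)).sq_hasLift sq'
  let l : Cocone X₂ := ⟨A, sq'.lift⟩
  refine ⟨⟨{ l := h₂.desc l, fac_left := h₁.hom_ext fun j => ?_,
             fac_right := h₂.hom_ext fun j => ?_ }⟩⟩
  · rw [reassoc_of% hφ j, h₂.fac l j]
    exact congr_app sq'.fac_left j
  · rw [h₂.fac_assoc l j]
    exact congr_app sq'.fac_right j

instance isStableUnderColimitsOfShape_llp_of_isDiscrete [IsDiscrete D] :
    R.llp.IsStableUnderColimitsOfShape D where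
  condition _ _ _ _ h₁ h₂ _ hf _ hφ :=
    llp_of_isColimit R h₁ h₂ (llp_functorCategory_le_functorCategory_llp R _ hf) hφ

end Colimit

section Lan

variable {C : Type*} [Category* C] {S K : Type*} [Category* S] [Category* K] (L : S ⥤ K)
  [∀ F : S ⥤ C, L.HasPointwiseLeftKanExtension F]

lemma lan_map_app_of_isStableUnderColimitsOfShape (W : MorphismProperty C) (k : K)
    [W.IsStableUnderColimitsOfShape (CostructuredArrow L k)] {F G : S ⥤ C} (f : F ⟶ G)
    (hf : ∀ a : CostructuredArrow L k, W (f.app a.left)) : W ((L.lan.map f).app k) := by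
  have isColimit (E : S ⥤ C) := L.isPointwiseLeftKanExtensionLeftKanExtensionUnit E k
  have unit_naturality (s : S) :
      f.app s ≫ (L.lanUnit.app G).app s =
        (L.lanUnit.app F).app s ≫ (L.lan.map f).app (L.obj s) :=
    congr_app (L.lanUnit.naturality f) s
  refine MorphismProperty.colimitsOfShape_le _
    (.mk' _ _ _ _ (isColimit F) (isColimit G)
      (Functor.whiskerLeft (CostructuredArrow.proj L k) f) hf _ fun a => ?_)
  calc ((L.lanUnit.app F).app a.left ≫ (L.lan.obj F).map a.hom) ≫ (L.lan.map f).app k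
      = (L.lanUnit.app F).app a.left ≫ (L.lan.map f).app (L.obj a.left) ≫
          (L.lan.obj G).map a.hom := by simp only [Category.assoc, NatTrans.naturality]
    _ = f.app a.left ≫ (L.lanUnit.app G).app a.left ≫ (L.lan.obj G).map a.hom := by
        rw [← Category.assoc, ← unit_naturality, Category.assoc]

lemma isIso_lan_map_app_of_isEmpty {F G : S ⥤ C} (f : F ⟶ G) (k : K)
    [IsEmpty (CostructuredArrow L k)] : IsIso ((L.lan.map f).app k) :=
  lan_map_app_of_isStableUnderColimitsOfShape L (.isomorphisms C) k f isEmptyElim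

end Lan

section ProjectiveLLP

variable {C : Type*} [Category* C] (R : MorphismProperty C) {K : Type*} [Category* K]

variable (K) in
/-- The maps of diagrams that have the left lifting property against the pointwise `R`-maps and
are pointwise in `R.llp`. If `C` has products, the first condition implies the second one; carrying
both avoids assuming any limits. -/
def projectiveLLP : MorphismProperty (K ⥤ C) :=
  (R.functorCategory K).llp ⊓ R.llp.functorCategory K

instance [HasPushouts C] : (projectiveLLP R K).IsStableUnderCobaseChange :=
  inferInstanceAs ((_ ⊓ _ : MorphismProperty _).IsStableUnderCobaseChange)

instance [HasIterationOfShape ℕ C] :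
    (projectiveLLP R K).IsStableUnderTransfiniteCompositionOfShape ℕ where
  le := le_inf
    ((MorphismProperty.transfiniteCompositionsOfShape_monotone ℕ inf_le_left).trans
      (MorphismProperty.transfiniteCompositionsOfShape_le _ _))
    ((MorphismProperty.transfiniteCompositionsOfShape_monotone ℕ inf_le_right).trans
      (MorphismProperty.transfiniteCompositionsOfShape_le _ _))

lemma projectiveLLP_lan_map {S : Type*} [Category* S] [IsDiscrete S] (L : S ⥤ K)
    [∀ F : S ⥤ C, L.HasPointwiseLeftKanExtension F] {F G : S ⥤ C} {f : F ⟶ G}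
    (hf : R.llp.functorCategory S f) : projectiveLLP R K (L.lan.map f) := by
  constructor
  · intro X Y p hp
    rw [(L.lanAdjunction C).hasLiftingProperty_iff]
    exact llp_functorCategory_le_functorCategory_llp R f hf _ fun s => hp (L.obj s)
  · exact fun k => lan_map_app_of_isStableUnderColimitsOfShape L R.llp k f fun a => hf a.left

end ProjectiveLLP

section Attach

variable {C : Type*} [Category* C] {S K : Type*} [Category* S] [Category* K] (L : S ⥤ K)
  [L.Full] [L.Faithful] [∀ F : S ⥤ C, L.HasPointwiseLeftKanExtension F]

lemma isIso_whiskerLeft_lanAdjunction_counit_app (Z : K ⥤ C) :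
    IsIso (L.whiskerLeft ((L.lanAdjunction C).counit.app Z)) :=
  .of_isIso_fac_left (hh := IsIso.id (L ⋙ Z))
    (L.lanUnit_app_whiskerLeft_lanAdjunction_counit_app Z)

variable [HasPushouts C]

lemma isIso_lanUnit_comp_of_isPushout_counit {Z Z' : K ⥤ C} {V : S ⥤ C} {i : L ⋙ Z ⟶ V}
    {i' : Z ⟶ Z'} {j : L.lan.obj V ⟶ Z'}
    (sq : IsPushout ((L.lanAdjunction C).counit.app Z) (L.lan.map i) i' j) :
    IsIso (L.lanUnit.app V ≫ L.whiskerLeft j) := by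
  have : IsIso (L.whiskerLeft j) :=
    (sq.map ((Functor.whiskeringLeft S K C).obj L)).isIso_inr_of_isIso
      (isIso_whiskerLeft_lanAdjunction_counit_app L Z)
  infer_instance

variable [IsDiscrete S] (R : MorphismProperty C) [R.RespectsIso] [R.llp.HasFactorization R]

lemma exists_projectiveLLP_left_and_hom_app {Y : K ⥤ C} (Z : Over Y) :
    ∃ (Z' : Over Y) (i : Z ⟶ Z'), projectiveLLP R K i.left ∧
      (∀ s, R (Z'.hom.app (L.obj s))) ∧
      ∀ k, IsEmpty (CostructuredArrow L k) → IsIso (i.left.app k) := by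
  let φ := (R.llp.functorCategory S).factorizationData (R.functorCategory S) (L.whiskerLeft Z.hom)
  let adj := L.lanAdjunction C
  have sq := IsPushout.of_hasPushout (adj.counit.app Z.left) (L.lan.map φ.i)
  let i := pushout.inl (adj.counit.app Z.left) (L.lan.map φ.i)
  let j := pushout.inr (adj.counit.app Z.left) (L.lan.map φ.i)
  let p := (adj.homEquiv φ.Z Y).symm φ.p
  have w : adj.counit.app Z.left ≫ Z.hom = L.lan.map φ.i ≫ p := by
    rw [← adj.homEquiv_naturality_left_symm, φ.fac, adj.homEquiv_symm_apply]
    exact (adj.counit.naturality Z.hom).symm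
  let q : pushout (adj.counit.app Z.left) (L.lan.map φ.i) ⟶ Y := sq.desc Z.hom p w
  refine ⟨Over.mk q, Over.homMk i (sq.inl_desc _ _ _), ?_, fun s => ?_, fun k hk => ?_⟩
  · exact (projectiveLLP R K).of_isPushout sq (projectiveLLP_lan_map R L φ.hi)
  · have fac : (L.lanUnit.app φ.Z ≫ L.whiskerLeft j) ≫ L.whiskerLeft q = φ.p :=
      calc (L.lanUnit.app φ.Z ≫ L.whiskerLeft j) ≫ L.whiskerLeft q
          = L.lanUnit.app φ.Z ≫ L.whiskerLeft p := by
            rw [Category.assoc, ← Functor.whiskerLeft_comp, sq.inr_desc]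
        _ = adj.homEquiv φ.Z Y p := by
            rw [adj.homEquiv_apply, L.lanAdjunction_unit]; rfl
        _ = φ.p := (adj.homEquiv φ.Z Y).apply_symm_apply φ.p
    have := isIso_lanUnit_comp_of_isPushout_counit L sq
    have hp : R (((L.lanUnit.app φ.Z ≫ L.whiskerLeft j) ≫ L.whiskerLeft q).app s) :=
      fac.symm ▸ φ.hp s
    exact (R.cancel_left_of_respectsIso ((L.lanUnit.app φ.Z ≫ L.whiskerLeft j).app s) _).1 hp
  · exact (sq.map ((evaluation K C).obj k)).isIso_inl_of_isIso
      (isIso_lan_map_app_of_isEmpty L φ.i k)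

end Attach

section Sequence

variable {C : Type*} [Category* C]

lemma isEventuallyConstantFrom_of_isIso_map_succ {F : ℕ ⥤ C} {n : ℕ}
    (h : ∀ m, n ≤ m → IsIso (F.map (homOfLE m.le_succ))) : F.IsEventuallyConstantFrom n := by
  suffices ∀ m (hm : n ≤ m), IsIso (F.map (homOfLE hm)) from fun m f => this m (leOfHom f)
  intro m hm
  induction hm with
  | refl => exact inferInstanceAs (IsIso (F.map (𝟙 n)))
  | @step m hm ih =>
    have := h m hm
    rw [← homOfLE_comp hm m.le_succ, F.map_comp]
    infer_instance

variable {K : Type*} [Category* K] (R : MorphismProperty C) {Y : K ⥤ C}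

lemma projectiveLLP_colimit_ι_zero_left [HasIterationOfShape ℕ C] {F : ℕ ⥤ Over Y}
    (hF : ∀ n : ℕ, projectiveLLP R K (F.map (homOfLE n.le_succ)).left) :
    projectiveLLP R K (colimit.ι F 0).left := by
  let c := (Over.forget Y).mapCocone (colimit.cocone F)
  exact MorphismProperty.transfiniteCompositionsOfShape_le _ ℕ _
    ⟨{ F := F ⋙ Over.forget Y
       isoBot := Iso.refl _
       incl := c.ι
       isColimit := isColimitOfPreserves (Over.forget Y) (colimit.isColimit F)
       fac := Category.id_comp _
       map_mem := fun n _ => hF n }⟩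

lemma colimit_hom_app_of_isIso [HasColimitsOfShape ℕ C] [R.RespectsIso] {F : ℕ ⥤ Over Y} {k : K}
    {n : ℕ} (hR : R ((F.obj n).hom.app k))
    (hiso : ∀ m, n ≤ m → IsIso ((F.map (homOfLE m.le_succ)).left.app k)) :
    R ((colimit F).hom.app k) := by
  let ev := Over.forget Y ⋙ (evaluation K C).obj k
  have : IsIso (ev.map (colimit.ι F n)) :=
    (isEventuallyConstantFrom_of_isIso_map_succ (F := F ⋙ ev) hiso).isIso_ι_of_isColimit
      (isColimitOfPreserves ev (colimit.isColimit F))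
  have fac : ev.map (colimit.ι F n) ≫ (colimit F).hom.app k = (F.obj n).hom.app k :=
    congr_app (Over.w (colimit.ι F n)) k
  exact (R.cancel_left_of_respectsIso (ev.map (colimit.ι F n)) _).1 (fac.symm ▸ hR)

end Sequence

section Graded

variable {K : Type v} [PartialOrder K] {r : K → ℕ}

lemma isDiscrete_fiber (hr : StrictMono r) (n : ℕ) :
    IsDiscrete (ObjectProperty.FullSubcategory fun k => r k = n) where
  subsingleton a b := ⟨fun f g => InducedCategory.Hom.ext (Subsingleton.elim _ _)⟩
  eq_of_hom {a b} f := by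
    have hab : a.obj ≤ b.obj := leOfHom f.hom
    refine ObjectProperty.FullSubcategory.ext (hab.eq_or_lt.resolve_right fun hlt => ?_)
    exact (hr hlt).ne (a.property.trans b.property.symm)

lemma isEmpty_costructuredArrow_fiber (hr : StrictMono r) {n : ℕ} {k : K} (hk : r k < n) :
    IsEmpty (CostructuredArrow (ObjectProperty.ι fun k => r k = n) k) where
  false a := (hr.monotone (leOfHom a.hom)).not_gt (a.left.property.symm ▸ hk)

variable {C : Type*} [Category* C] [HasColimitsOfSize.{v, v} C] (R : MorphismProperty C)
  [R.RespectsIso] [R.llp.HasFactorization R] {Y : K ⥤ C}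

lemma exists_sequence_over (hr : StrictMono r) (Z : Over Y) :
    ∃ F : ℕ ⥤ Over Y, F.obj 0 = Z ∧ ∀ n,
      projectiveLLP R K (F.map (homOfLE n.le_succ)).left ∧
      (∀ k, r k = n → R ((F.obj (n + 1)).hom.app k)) ∧
      ∀ k, r k < n → IsIso ((F.map (homOfLE n.le_succ)).left.app k) := by
  have step (n : ℕ) (Z : Over Y) : ∃ (Z' : Over Y) (i : Z ⟶ Z'), projectiveLLP R K i.left ∧
      (∀ k, r k = n → R (Z'.hom.app k)) ∧ ∀ k, r k < n → IsIso (i.left.app k) := by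
    have := isDiscrete_fiber hr n
    obtain ⟨Z', i, hi, hR, hiso⟩ :=
      exists_projectiveLLP_left_and_hom_app (ObjectProperty.ι fun k => r k = n) R Z
    exact ⟨Z', i, hi, fun k hk => hR ⟨k, hk⟩,
      fun k hk => hiso k (isEmpty_costructuredArrow_fiber hr hk)⟩
  choose next incl hincl using step
  let T : ℕ → Over Y := Nat.rec Z next
  refine ⟨Functor.ofSequence (X := T) fun n => incl n (T n), rfl, fun n => ?_⟩
  rw [Functor.ofSequence_map_homOfLE_succ]
  exact hincl n (T n)

lemma exists_projectiveLLP_left_and_functorCategory_hom (hr : StrictMono r) (Z : Over Y) :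
    ∃ (Z' : Over Y) (i : Z ⟶ Z'), projectiveLLP R K i.left ∧ R.functorCategory K Z'.hom := by
  have : HasColimitsOfSize.{0, 0} C := hasColimitsOfSizeShrink.{0, 0} C
  obtain ⟨F, rfl, hF⟩ := exists_sequence_over R hr Z
  exact ⟨colimit F, colimit.ι F 0, projectiveLLP_colimit_ι_zero_left R fun n => (hF n).1,
    fun k => colimit_hom_app_of_isIso R ((hF (r k)).2.1 k rfl) fun m hm => (hF m).2.2 k hm⟩

lemma hasFactorization_projectiveLLP (hr : StrictMono r) :
    (projectiveLLP R K).HasFactorization (R.functorCategory K) where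
  nonempty_mapFactorizationData f :=
    let ⟨_, i, hi, hp⟩ := exists_projectiveLLP_left_and_functorCategory_hom R hr (Over.mk f)
    ⟨{ Z := _, i := i.left, p := _, fac := Over.w i, hi := hi, hp := hp }⟩

end Graded

section Final

lemma exists_monotone_finset_upperBound (α : Type*) [Preorder α] [IsDirectedOrder α]
    [Nonempty α] :
    ∃ f : Finset α → α, Monotone f ∧ ∀ s, ∀ a ∈ s, a ≤ f s := by
  classical
  choose bound le_bound using fun s : Finset α => s.exists_le
  let f : Finset α → α := Finset.strongInduction fun s ih =>
    bound (s ∪ s.ssubsets.attach.image fun t => ih t.1 (Finset.mem_ssubsets.1 t.2))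
  have f_eq (s : Finset α) : f s = bound (s ∪ s.ssubsets.image f) := by
    rw [← Finset.attach_image_val (s := s.ssubsets), Finset.image_image]
    exact Finset.strongInduction_eq _ s
  refine ⟨f, fun s t hst => ?_, fun s a ha => ?_⟩
  · obtain rfl | hlt := hst.eq_or_lt
    · rfl
    · rw [f_eq t]
      exact le_bound _ _ (Finset.mem_union_right _
        (Finset.mem_image_of_mem f (Finset.mem_ssubsets.2 hlt)))
  · rw [f_eq]
    exact le_bound _ _ (Finset.mem_union_left _ ha)

lemma exists_strictMono_nat_and_final (H : Type v) [SmallCategory H] [IsFiltered H] :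
    ∃ (K : Type v) (_ : PartialOrder K) (_ : IsFiltered K) (r : K → ℕ) (F : K ⥤ H),
      StrictMono r ∧ F.Final := by
  obtain ⟨α, _, _, _, G, hG⟩ := IsFiltered.exists_directed H
  obtain ⟨f, hf, le_f⟩ := exists_monotone_finset_upperBound α
  have : hf.functor.Final := hf.final_functor_iff.2 fun a =>
    ⟨{a}, le_f _ _ (Finset.mem_singleton_self a)⟩
  exact ⟨Finset α, inferInstance, inferInstance, Finset.card, hf.functor ⋙ G,
    Finset.card_strictMono, inferInstance⟩

end Final

section FinitelyPresentable

variable {C : Type*} [Category.{v} C]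

lemma isStableUnderColimitsOfShape_rlp (I : MorphismProperty C) (H : Type*) [Category* H]
    [IsFiltered H] (hI : ∀ ⦃A B : C⦄ (i : A ⟶ B), I i →
      PreservesColimitsOfShape H (coyoneda.obj (.op A)) ∧
      PreservesColimitsOfShape H (coyoneda.obj (.op B))) :
    I.rlp.IsStableUnderColimitsOfShape H where
  condition X Y c d hc hd p hp φ hφ := by
    intro A B i hi
    obtain ⟨_, _⟩ := hI i hi
    refine ⟨fun {a b} sq => ?_⟩
    obtain ⟨h₁, a', ha⟩ := exists_hom_of_preservesColimit_coyoneda hc a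
    obtain ⟨h₂, b', hb⟩ := exists_hom_of_preservesColimit_coyoneda hd b
    obtain ⟨k, s, t, hst⟩ := exists_eq_of_preservesColimit_coyoneda hd
      (a' ≫ p.app h₁) (i ≫ b') (by
        rw [Category.assoc, Category.assoc, hb, ← sq.w, ← ha, Category.assoc, hφ])
    have sq' : CommSq (a' ≫ X.map s) i (p.app k) (b' ≫ Y.map t) := ⟨by
      rw [Category.assoc, p.naturality, ← Category.assoc, hst, Category.assoc]⟩
    have : sq'.HasLift := (hp k i hi).sq_hasLift sq'
    refine ⟨⟨⟨sq'.lift ≫ c.ι.app k, ?_, ?_⟩⟩⟩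
    · rw [sq'.fac_left_assoc, Category.assoc, c.w, ha]
    · rw [Category.assoc, hφ, sq'.fac_right_assoc, Category.assoc, d.w, hb]

end FinitelyPresentable

section TwoOutOfThree

variable {C : Type*} [Category* C] {W R : MorphismProperty C} [W.HasTwoOutOfThreeProperty]

lemma isStableUnderColimitsOfShape_of_llp_le {K : Type*} [Category* K] [HasColimitsOfShape K C]
    [(projectiveLLP R K).HasFactorization (R.functorCategory K)]
    [(R ⊓ W).IsStableUnderColimitsOfShape K] (hW : R.llp ≤ W) :
    W.IsStableUnderColimitsOfShape K where
  condition X Y c d hc hd f hf φ hφ := by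
    obtain ⟨Z, i, p, rfl, hi, hpR⟩ :=
      (projectiveLLP R K).factorizationData (R.functorCategory K) f
    let φ₁ := hc.map (colimit.cocone Z) i
    let φ₂ := (colimit.isColimit Z).map d p
    have hφ₁₂ : φ₁ ≫ φ₂ = φ := hc.hom_ext fun k => by
      rw [hφ, hc.ι_map_assoc, IsColimit.ι_map, NatTrans.comp_app, Category.assoc]
    have hφ₁ : W φ₁ := hW _ (llp_of_isColimit R hc (colimit.isColimit Z) hi.1 (hc.ι_map _ _))
    have hpW (k : K) : W (p.app k) := W.of_precomp (i.app k) _ (hW _ (hi.2 k)) (hf k)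
    have hφ₂ : (R ⊓ W) φ₂ := MorphismProperty.colimitsOfShape_le _
      (.mk' _ _ _ _ (colimit.isColimit Z) hd p (fun k => ⟨hpR k, hpW k⟩) _ (IsColimit.ι_map _ _ _))
    exact hφ₁₂ ▸ W.comp_mem _ _ hφ₁ hφ₂.2

lemma isStableUnderFilteredColimits_of_llp_le [HasColimitsOfSize.{v, v} C] [R.RespectsIso]
    [R.llp.HasFactorization R] [MorphismProperty.IsStableUnderFilteredColimits.{v, v} (R ⊓ W)]
    (hW : R.llp ≤ W) : MorphismProperty.IsStableUnderFilteredColimits.{v, v} W where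
  isStableUnderColimitsOfShape H _ _ := by
    obtain ⟨K, _, _, r, F, hr, _⟩ := exists_strictMono_nat_and_final H
    have := hasFactorization_projectiveLLP R hr
    have := isStableUnderColimitsOfShape_of_llp_le (K := K) hW
    exact (W.isStableUnderColimitsOfShape_iff_colimitsOfShape_le H).2
      ((W.colimitsOfShape_le_of_final F).trans MorphismProperty.colimitsOfShape_le)

end TwoOutOfThree

lemma isRetractOf_of_retractArrow {C : Type*} [Category* C] {A B X Y : C} {f : A ⟶ B} {g : X ⟶ Y}
    (h : RetractArrow f g) : IsRetractOf f g :=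
  ⟨h.i.left, h.r.left, h.i.right, h.r.right, h.left.retract, h.right.retract, h.i_w, h.r_w⟩

namespace ModelStructure

variable {C : Type*} [Category* C] (m : ModelStructure C)

instance : m.W.HasTwoOutOfThreeProperty where
  comp_mem f g := (m.two_out_of_three f g).1
  of_precomp f g := (m.two_out_of_three f g).2.1
  of_postcomp f g := (m.two_out_of_three f g).2.2

instance : m.Fib.IsStableUnderRetracts where
  of_retract h := m.retract_Fib (isRetractOf_of_retractArrow h)

instance : m.TrivCof.IsStableUnderRetracts where
  of_retract h hg :=
    ⟨m.retract_Cof (isRetractOf_of_retractArrow h) hg.1,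
      m.retract_W (isRetractOf_of_retractArrow h) hg.2⟩

instance : m.TrivCof.HasFactorization m.Fib where
  nonempty_mapFactorizationData f :=
    let ⟨_, i, p, hiCof, hiW, hp, fac⟩ := m.factor_TrivCof_Fib f
    ⟨{ Z := _, i := i, p := p, fac := fac, hi := ⟨hiCof, hiW⟩, hp := hp }⟩

instance : MorphismProperty.IsWeakFactorizationSystem m.TrivCof m.Fib :=
  .mk' _ _ fun i p hi hp => m.lift_TrivCof_Fib i p hi.1 hi.2 hp

lemma llp_fib_eq_trivCof : m.Fib.llp = m.TrivCof := MorphismProperty.llp_eq_of_wfs _ _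

instance : m.Fib.llp.HasFactorization m.Fib := m.llp_fib_eq_trivCof ▸ inferInstance

end ModelStructure

end Paper

theorem statement11_general {M : Type u} [Category.{v} M] [HasColimits M]
    (m : Paper.ModelStructure M) (I : MorphismProperty M) (hTrivFib : m.TrivFib = I.rlp)
    (hI : ∀ ⦃A B : M⦄ (i : A ⟶ B), I i →
      Paper.FinitelyPresentable A ∧ Paper.FinitelyPresentable B) :
    MorphismProperty.IsStableUnderFilteredColimits.{v, v} m.W ∧
      MorphismProperty.IsStableUnderFilteredColimits.{v, v} m.TrivFib := by
  have trivFib_stable : MorphismProperty.IsStableUnderFilteredColimits.{v, v} m.TrivFib :=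
    ⟨fun H _ _ => hTrivFib ▸ Paper.isStableUnderColimitsOfShape_rlp I H fun _ _ i hi =>
      ⟨((hI i hi).1 H _ ‹_›).some, ((hI i hi).2 H _ ‹_›).some⟩⟩
  have : MorphismProperty.IsStableUnderFilteredColimits.{v, v} (m.Fib ⊓ m.W) := trivFib_stable
  have llp_fib_le : m.Fib.llp ≤ m.W := m.llp_fib_eq_trivCof.trans_le fun _ _ _ hi => hi.2
  exact ⟨Paper.isStableUnderFilteredColimits_of_llp_le llp_fib_le, trivFib_stable⟩

/-- In a cofibrantly generated model category (trivial fibrations are exactly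
the maps with RLP w.r.t. `I`, fibrations exactly those with RLP w.r.t. `J`, and the small
object argument provides factorizations for `I` and `J`) whose generating cofibrations have
finitely presentable sources and targets, weak equivalences and trivial fibrations are
closed under filtered colimits. -/
theorem statement11 {M : Type u} [Category.{v} M] [Limits.HasLimits M] [Limits.HasColimits M]
    (m : Paper.ModelStructure M) (I J : CategoryTheory.MorphismProperty M)
    (hTrivFib : ∀ ⦃A B : M⦄ (f : A ⟶ B), m.TrivFib f ↔ Paper.RLP I f)
    (hFib : ∀ ⦃A B : M⦄ (f : A ⟶ B), m.Fib f ↔ Paper.RLP J f)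
    (soaI : ∀ ⦃X Y : M⦄ (f : X ⟶ Y), ∃ (Z : M) (i : X ⟶ Z) (q : Z ⟶ Y),
      Paper.LLP (Paper.RLP I) i ∧ Paper.RLP I q ∧ i ≫ q = f)
    (soaJ : ∀ ⦃X Y : M⦄ (f : X ⟶ Y), ∃ (Z : M) (i : X ⟶ Z) (q : Z ⟶ Y),
      Paper.LLP (Paper.RLP J) i ∧ Paper.RLP J q ∧ i ≫ q = f)
    (hI : ∀ ⦃A B : M⦄ (i : A ⟶ B), I i →
      Paper.FinitelyPresentable A ∧ Paper.FinitelyPresentable B)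
    (H : Type v) [SmallCategory H] [IsFiltered H]
    (X Y : H ⥤ M) (p : X ⟶ Y) :
    ((∀ h : H, m.W (p.app h)) → m.W (Limits.colimMap p)) ∧
    ((∀ h : H, m.TrivFib (p.app h)) → m.TrivFib (Limits.colimMap p)) := by
  obtain ⟨_, _⟩ := statement11_general m I
    (MorphismProperty.ext _ _ fun _ _ f => hTrivFib f) hI
  exact ⟨MorphismProperty.colimMap p, MorphismProperty.colimMap p⟩
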